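/- In the setting of the D2Q9 MRT model — velocities c_1,…,c_9 = (0,0),(1,0),(0,1),(−1,0),(0,−1),(1,1),(−1,1),(−1,−1),(1,−1); M_{ij} = p_i(c_j) with (p_1,…,p_9) = (1, X, Y, X², Y², XY, X²Y, XY², X²Y²); ω = (ω_0, ω_1, ω_2, ω_1, ω_2, ω̃, ω̃, ω̃, ω̃) with all entries strictly positive and summing to 1; W = diag(ω); E = ω𝟙ᵀ; S = diag(s_0, s_x, s_y, s_{2|x²}, s_{2|y²}, s_{2|xy}, s_{3|x²y}, s_{3|xy²}, s_{4|x²y²}) — assume the symmetry conditions s_{3|x²y} = s_y, s_{3|xy²} = s_x, s_{4|x²y²} = s_{2|x²} = s_{2|y²}, assume s_x, s_y, s_{2|x²}, s_{2|y²}, s_{2|xy} are all ≥ 0, and let c ≤ 0. Then for J = M^{-1}SM·(E − I) + cE, the matrix J·W is symmetric and negative semidefinite; consequently there exist an invertible P ∈ ℝ^{9×9} and nonnegative λ_1,…,λ_9 with PᵀP = W^{-1} and P·J = −diag(λ_1,…,λ_9)·P, i.e., the D2Q9 MRT-LB model satisfies the stability structure. -/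

import Mathlib

open Matrix

/-- The nine D2Q9 discrete velocities. -/
noncomputable def c9 : Fin 9 → ℝ × ℝ :=
  ![(0, 0), (1, 0), (0, 1), (-1, 0), (0, -1), (1, 1), (-1, 1), (-1, -1), (1, -1)]

/-- The nine monomials `1, X, Y, X², Y², XY, X²Y, XY², X²Y²`. -/
noncomputable def p9 : Fin 9 → ℝ → ℝ → ℝ :=
  ![fun _ _ => 1, fun x _ => x, fun _ y => y, fun x _ => x ^ 2, fun _ y => y ^ 2,
    fun x y => x * y, fun x y => x ^ 2 * y, fun x y => x * y ^ 2, fun x y => x ^ 2 * y ^ 2]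

/-- The natural D2Q9 transformation matrix `M_{ij} = p_i(c_j)`. -/
noncomputable def M9 : Matrix (Fin 9) (Fin 9) ℝ :=
  Matrix.of fun i j => p9 i (c9 j).1 (c9 j).2

/-- Entries of `M9`. -/
theorem M9_eq : M9 = !![1,1,1,1,1,1,1,1,1; 0,1,0,-1,0,1,-1,-1,1; 0,0,1,0,-1,1,1,-1,-1;
    0,1,0,1,0,1,1,1,1; 0,0,1,0,1,1,1,1,1; 0,0,0,0,0,1,-1,1,-1; 0,0,0,0,0,1,1,-1,-1;
    0,0,0,0,0,1,-1,-1,1; 0,0,0,0,0,1,1,1,1] := by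
  ext i j
  fin_cases i <;> fin_cases j <;> norm_num [M9, p9, c9]

/-- `M9` is injective, hence invertible. -/
theorem M9_det : IsUnit M9.det := by
  rw [isUnit_iff_ne_zero]
  intro h
  obtain ⟨v, hv, h0⟩ := Matrix.exists_mulVec_eq_zero_iff.mpr h
  apply hv
  rw [M9_eq] at h0
  have e := fun i => congrFun h0 i
  have e0 := e 0
  have e1 := e 1
  have e2 := e 2
  have e3 := e 3
  have e4 := e 4
  have e5 := e 5
  have e6 := e 6
  have e7 := e 7
  have e8 := e 8
  simp [Matrix.mulVec, dotProduct, Fin.sum_univ_succ] at e0 e1 e2 e3 e4 e5 e6 e7 e8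
  ext i
  fin_cases i <;> simp <;> linarith

/-- Spectral theorem consequence. -/
theorem stab_structure {n : ℕ} (ω : Fin n → ℝ) (hω : ∀ i, 0 < ω i) (J : Matrix (Fin n) (Fin n) ℝ)
    (hs : (J * Matrix.diagonal ω).IsSymm)
    (hn : ∀ x : Fin n → ℝ, x ⬝ᵥ (J * Matrix.diagonal ω).mulVec x ≤ 0) :
    ∃ (P : Matrix (Fin n) (Fin n) ℝ) (lam : Fin n → ℝ),
      IsUnit P.det ∧ (∀ k, 0 ≤ lam k) ∧
      Pᵀ * P = Matrix.diagonal (fun i => (ω i)⁻¹) ∧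
      P * J = -(Matrix.diagonal lam * P) := by
  set D : Matrix (Fin n) (Fin n) ℝ := Matrix.diagonal fun i => (Real.sqrt (ω i))⁻¹ with hD
  set R : Matrix (Fin n) (Fin n) ℝ := Matrix.diagonal fun i => Real.sqrt (ω i) with hR
  have hne : ∀ i, Real.sqrt (ω i) ≠ 0 := fun i => (Real.sqrt_pos.mpr (hω i)).ne'
  have hRD : R * D = 1 := by
    simp [hD, hR, Matrix.diagonal_mul_diagonal, hne]
  have hDR : D * R = 1 := by
    simp [hD, hR, Matrix.diagonal_mul_diagonal, hne]
  have hDD : D * D = Matrix.diagonal (fun i => (ω i)⁻¹) := by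
    simp only [hD, Matrix.diagonal_mul_diagonal]
    congr 1
    ext i
    rw [← mul_inv, Real.mul_self_sqrt (hω i).le]
  have hRR : Matrix.diagonal ω = R * R := by
    simp only [hR, Matrix.diagonal_mul_diagonal]
    congr 1
    ext i
    rw [Real.mul_self_sqrt (hω i).le]
  have hDt : Dᵀ = D := by simp [hD]
  set T := J * Matrix.diagonal ω with hT
  have hJ : J = T * (D * D) := by
    rw [hT, hRR]
    simp only [Matrix.mul_assoc]
    rw [← Matrix.mul_assoc R D D, hRD, Matrix.one_mul, hRD, Matrix.mul_one]
  have hps : (-(D * T * D)).PosSemidef := by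
    apply Matrix.PosSemidef.of_dotProduct_mulVec_nonneg
    · rw [Matrix.IsHermitian, Matrix.conjTranspose_eq_transpose_of_trivial]
      rw [Matrix.transpose_neg, Matrix.transpose_mul, Matrix.transpose_mul, hDt, hs.eq,
        ← Matrix.mul_assoc]
    · intro x
      have := hn (D *ᵥ x)
      have e : star x ⬝ᵥ (-(D * T * D)) *ᵥ x = - ((D *ᵥ x) ⬝ᵥ T *ᵥ (D *ᵥ x)) := by
        rw [Matrix.neg_mulVec, dotProduct_neg, ← Matrix.mulVec_mulVec, ← Matrix.mulVec_mulVec,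
          Matrix.dotProduct_mulVec, ← Matrix.mulVec_transpose, hDt]
        simp
      rw [e]
      linarith
  have hH := hps.1
  set U : Matrix (Fin n) (Fin n) ℝ := (hH.eigenvectorUnitary : Matrix (Fin n) (Fin n) ℝ) with hU
  have hUU : Uᵀ * U = 1 := by
    have := Unitary.coe_star_mul_self hH.eigenvectorUnitary
    simpa [Matrix.star_eq_conjTranspose] using this
  have hUU' : U * Uᵀ = 1 := by
    have := Unitary.coe_mul_star_self hH.eigenvectorUnitary
    simpa [Matrix.star_eq_conjTranspose] using this
  have hspec : -(D * T * D) = U * Matrix.diagonal hH.eigenvalues * Uᵀ := by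
    have := hH.spectral_theorem
    simpa [Unitary.conjStarAlgAut_apply, Matrix.star_eq_conjTranspose, Function.comp_def]
      using this
  refine ⟨Uᵀ * D, hH.eigenvalues, ?_, hps.eigenvalues_nonneg, ?_, ?_⟩
  · apply Matrix.isUnit_det_of_right_inverse (B := R * U)
    rw [Matrix.mul_assoc, ← Matrix.mul_assoc D, hDR, Matrix.one_mul, hUU]
  · rw [Matrix.transpose_mul, Matrix.transpose_transpose, hDt, Matrix.mul_assoc,
      ← Matrix.mul_assoc U, hUU', Matrix.one_mul, hDD]
  · have h2 : D * T * D = -(U * Matrix.diagonal hH.eigenvalues * Uᵀ) := by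
      rw [← hspec, neg_neg]
    calc Uᵀ * D * J = Uᵀ * (D * T * D) * D := by
          rw [hJ]
          simp only [Matrix.mul_assoc]
      _ = -((Uᵀ * U) * Matrix.diagonal hH.eigenvalues * Uᵀ * D) := by
          have h3 : Uᵀ * (D * T * D) * D
              = Uᵀ * -(U * Matrix.diagonal hH.eigenvalues * Uᵀ) * D :=
            congrArg (fun X => Uᵀ * X * D) h2
          rw [h3]
          simp only [Matrix.mul_assoc, Matrix.mul_neg, Matrix.neg_mul]
      _ = _ := by rw [hUU, Matrix.one_mul, Matrix.mul_assoc]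

/-- Explicit parity decomposition of `-(J W)`. -/
noncomputable def N9 (ω0 ω1 ω2 ωt sx sy a b c : ℝ) : Matrix (Fin 9) (Fin 9) ℝ :=
  let v : (Fin 9 → ℝ) → Matrix (Fin 9) (Fin 9) ℝ := fun u => Matrix.vecMulVec u u
  (a * ω0) • v ![1,0,0,0,0,0,0,0,0] + (a * ω1 / 2) • v ![0,1,0,1,0,0,0,0,0]
   + (a * ω2 / 2) • v ![0,0,1,0,1,0,0,0,0] + (a * ωt / 4) • v ![0,0,0,0,0,1,1,1,1]
   + (sx * ω1 / 2) • v ![0,1,0,-1,0,0,0,0,0] + (sx * ωt / 4) • v ![0,0,0,0,0,1,-1,-1,1]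
   + (sy * ω2 / 2) • v ![0,0,1,0,-1,0,0,0,0] + (sy * ωt / 4) • v ![0,0,0,0,0,1,1,-1,-1]
   + (b * ωt / 4) • v ![0,0,0,0,0,1,-1,1,-1]
   + (-a - c) • v ![ω0, ω1, ω2, ω1, ω2, ωt, ωt, ωt, ωt]

theorem N9_symm (ω0 ω1 ω2 ωt sx sy a b c : ℝ) : (N9 ω0 ω1 ω2 ωt sx sy a b c).IsSymm := by
  simp only [Matrix.IsSymm, N9, Matrix.transpose_add, Matrix.transpose_smul,
    Matrix.transpose_vecMulVec]

theorem N9_psd (ω0 ω1 ω2 ωt sx sy a b c : ℝ)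
    (hω0 : 0 < ω0) (hω1 : 0 < ω1) (hω2 : 0 < ω2) (hωt : 0 < ωt)
    (hsum : ω0 + 2 * ω1 + 2 * ω2 + 4 * ωt = 1)
    (hsx : 0 ≤ sx) (hsy : 0 ≤ sy) (ha : 0 ≤ a) (hb : 0 ≤ b) (hc : c ≤ 0) (x : Fin 9 → ℝ) :
    0 ≤ x ⬝ᵥ (N9 ω0 ω1 ω2 ωt sx sy a b c) *ᵥ x := by
  have hv : ∀ u : Fin 9 → ℝ, x ⬝ᵥ (Matrix.vecMulVec u u) *ᵥ x = (u ⬝ᵥ x) ^ 2 := by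
    intro u
    rw [Matrix.vecMulVec_mulVec]
    simp [dotProduct_comm x u, sq]
  simp only [N9, Matrix.add_mulVec, Matrix.smul_mulVec, dotProduct_add, dotProduct_smul, hv,
    smul_eq_mul]
  set p := (![0,1,0,-1,0,0,0,0,0] : Fin 9 → ℝ) ⬝ᵥ x
  set q := (![0,0,0,0,0,1,-1,-1,1] : Fin 9 → ℝ) ⬝ᵥ x
  set r := (![0,0,1,0,-1,0,0,0,0] : Fin 9 → ℝ) ⬝ᵥ x
  set s := (![0,0,0,0,0,1,1,-1,-1] : Fin 9 → ℝ) ⬝ᵥ x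
  set t := (![0,0,0,0,0,1,-1,1,-1] : Fin 9 → ℝ) ⬝ᵥ x
  have hy : (![ω0, ω1, ω2, ω1, ω2, ωt, ωt, ωt, ωt] : Fin 9 → ℝ) ⬝ᵥ x =
      ω0 * ((![1,0,0,0,0,0,0,0,0] : Fin 9 → ℝ) ⬝ᵥ x)
      + ω1 * ((![0,1,0,1,0,0,0,0,0] : Fin 9 → ℝ) ⬝ᵥ x)
      + ω2 * ((![0,0,1,0,1,0,0,0,0] : Fin 9 → ℝ) ⬝ᵥ x)
      + ωt * ((![0,0,0,0,0,1,1,1,1] : Fin 9 → ℝ) ⬝ᵥ x) := by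
    simp [dotProduct, Fin.sum_univ_succ]
    ring
  rw [hy]
  generalize (![1,0,0,0,0,0,0,0,0] : Fin 9 → ℝ) ⬝ᵥ x = A
  generalize (![0,1,0,1,0,0,0,0,0] : Fin 9 → ℝ) ⬝ᵥ x = B
  generalize (![0,0,1,0,1,0,0,0,0] : Fin 9 → ℝ) ⬝ᵥ x = C
  generalize (![0,0,0,0,0,1,1,1,1] : Fin 9 → ℝ) ⬝ᵥ x = F
  set y := ω0 * A + ω1 * B + ω2 * C + ωt * F with hyd
  have key : a * (ω0 * A ^ 2 + ω1 / 2 * B ^ 2 + ω2 / 2 * C ^ 2 + ωt / 4 * F ^ 2 - y ^ 2) =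
      a * (ω0 * (A - y) ^ 2 + ω1 / 2 * (B - 2 * y) ^ 2 + ω2 / 2 * (C - 2 * y) ^ 2
        + ωt / 4 * (F - 4 * y) ^ 2) := by
    linear_combination (-a * y ^ 2) * hsum - 2 * a * y * hyd
  have k2 : 0 ≤ a * (ω0 * (A - y) ^ 2 + ω1 / 2 * (B - 2 * y) ^ 2 + ω2 / 2 * (C - 2 * y) ^ 2
        + ωt / 4 * (F - 4 * y) ^ 2) := by positivity
  have k3 : 0 ≤ sx * ω1 / 2 * p ^ 2 + sx * ωt / 4 * q ^ 2 + sy * ω2 / 2 * r ^ 2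
      + sy * ωt / 4 * s ^ 2 + b * ωt / 4 * t ^ 2 := by positivity
  have k4 : 0 ≤ (-c) * y ^ 2 := mul_nonneg (by linarith) (sq_nonneg y)
  linarith

theorem M9_mulVec (a0 a1 a2 a3 a4 a5 a6 a7 a8 : ℝ) :
    M9 *ᵥ ![a0, a1, a2, a3, a4, a5, a6, a7, a8] =
      ![a0 + a1 + a2 + a3 + a4 + a5 + a6 + a7 + a8, a1 - a3 + a5 - a6 - a7 + a8,
        a2 - a4 + a5 + a6 - a7 - a8, a1 + a3 + a5 + a6 + a7 + a8, a2 + a4 + a5 + a6 + a7 + a8,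
        a5 - a6 + a7 - a8, a5 + a6 - a7 - a8, a5 - a6 - a7 + a8, a5 + a6 + a7 + a8] := by
  rw [M9_eq]
  ext i
  fin_cases i <;> simp [Matrix.mulVec, dotProduct, Fin.sum_univ_succ] <;> ring

set_option maxHeartbeats 4000000 in
theorem N9_key (ω0 ω1 ω2 ωt s0 sx sy a b : ℝ)
    (hsum : ω0 + 2 * ω1 + 2 * ω2 + 4 * ωt = 1) :
    let ω : Fin 9 → ℝ := ![ω0, ω1, ω2, ω1, ω2, ωt, ωt, ωt, ωt]
    Matrix.diagonal ![s0, sx, sy, a, a, b, sy, sx, a] *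
      (Matrix.vecMulVec (M9 *ᵥ ω) ω - M9 * Matrix.diagonal ω)
      = -(M9 * N9 ω0 ω1 ω2 ωt sx sy a b 0) := by
  intro ω
  obtain rfl : ω0 = 1 - 2 * ω1 - 2 * ω2 - 4 * ωt := by linarith
  simp only [N9, Matrix.mul_add, Matrix.mul_smul, Matrix.mul_vecMulVec, M9_mulVec, ω]
  rw [M9_eq]
  ext i j
  simp only [Matrix.diagonal_mul, Matrix.sub_apply, Matrix.mul_diagonal, Matrix.neg_apply,
    Matrix.add_apply, Matrix.smul_apply, Matrix.vecMulVec_apply, smul_eq_mul]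
  fin_cases i <;> fin_cases j <;> simp <;> ring

/-- For the D2Q9 MRT model with positive weights summing to `1`, symmetry conditions
`s_{3|x²y} = s_y`, `s_{3|xy²} = s_x`, `s_{4|x²y²} = s_{2|x²} = s_{2|y²}`, nonnegative
relaxation parameters `s_x, s_y, s_{2|x²}, s_{2|y²}, s_{2|xy}` and `c ≤ 0`, the Jacobian
`J = M⁻¹SM·(E - I) + cE` has `J·W` symmetric and negative semidefinite; consequently the
model satisfies the stability structure: there are an invertible `P` and `λ_k ≥ 0` with
`PᵀP = W⁻¹` and `P·J = -diag(λ)·P`. -/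
theorem stmt_10 (ω0 ω1 ω2 ωt s0 sx sy s2x2 s2y2 s2xy s3x2y s3xy2 s4x2y2 c : ℝ)
    (hω0 : 0 < ω0) (hω1 : 0 < ω1) (hω2 : 0 < ω2) (hωt : 0 < ωt)
    (hsum : ω0 + 2 * ω1 + 2 * ω2 + 4 * ωt = 1)
    (h1 : s3x2y = sy) (h2 : s3xy2 = sx) (h3 : s4x2y2 = s2x2) (h4 : s2x2 = s2y2)
    (hsx : 0 ≤ sx) (hsy : 0 ≤ sy) (hs2x2 : 0 ≤ s2x2) (hs2y2 : 0 ≤ s2y2) (hs2xy : 0 ≤ s2xy)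
    (hc : c ≤ 0) :
    let ω : Fin 9 → ℝ := ![ω0, ω1, ω2, ω1, ω2, ωt, ωt, ωt, ωt]
    let W := Matrix.diagonal ω
    let E := Matrix.vecMulVec ω (fun _ => (1 : ℝ))
    let S := Matrix.diagonal ![s0, sx, sy, s2x2, s2y2, s2xy, s3x2y, s3xy2, s4x2y2]
    let J := M9⁻¹ * S * M9 * (E - 1) + c • E
    (J * W).IsSymm ∧
    (∀ x : Fin 9 → ℝ, x ⬝ᵥ (J * W).mulVec x ≤ 0) ∧
    ∃ (P : Matrix (Fin 9) (Fin 9) ℝ) (lam : Fin 9 → ℝ),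
      IsUnit P.det ∧ (∀ k, 0 ≤ lam k) ∧
      Pᵀ * P = Matrix.diagonal (fun i => (ω i)⁻¹) ∧
      P * J = -(Matrix.diagonal lam * P) := by
  intro ω W E S J
  have hJW : J * W = - N9 ω0 ω1 ω2 ωt sx sy s2x2 s2xy c := by
    have hk := N9_key ω0 ω1 ω2 ωt s0 sx sy s2x2 s2xy hsum
    have hS : S = Matrix.diagonal ![s0, sx, sy, s2x2, s2x2, s2xy, sy, sx, s2x2] := by
      simp only [S, h1, h2, h3, h4]
    have hEW : E * W = Matrix.vecMulVec ω ω := by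
      ext i j
      simp [E, W, Matrix.vecMulVec_apply]
    have hN : N9 ω0 ω1 ω2 ωt sx sy s2x2 s2xy c
        = N9 ω0 ω1 ω2 ωt sx sy s2x2 s2xy 0 - c • Matrix.vecMulVec ω ω := by
      simp only [N9, ω]
      module
    have e : M9⁻¹ * S * M9 * (E - 1) * W
        = M9⁻¹ * (S * (Matrix.vecMulVec (M9 *ᵥ ω) ω - M9 * W)) := by
      rw [← Matrix.mul_vecMulVec, ← hEW]
      noncomm_ring
    simp only [J]
    rw [Matrix.add_mul, e, hS, hk, Matrix.smul_mul, hEW, hN, Matrix.mul_neg,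
      ← Matrix.mul_assoc, Matrix.nonsing_inv_mul _ M9_det, Matrix.one_mul]
    abel
  have hsym : (J * W).IsSymm := by
    rw [hJW]
    exact (N9_symm _ _ _ _ _ _ _ _ _).neg
  have hneg : ∀ x : Fin 9 → ℝ, x ⬝ᵥ (J * W).mulVec x ≤ 0 := by
    intro x
    rw [hJW, Matrix.neg_mulVec, dotProduct_neg]
    have := N9_psd ω0 ω1 ω2 ωt sx sy s2x2 s2xy c hω0 hω1 hω2 hωt hsum hsx hsy hs2x2 hs2xy hc x
    linarith
  refine ⟨hsym, hneg, stab_structure ω ?_ J hsym hneg⟩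
  intro i
  fin_cases i <;> simp [ω] <;> assumption
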